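/- Let V be a finite set and let H be a loopless multigraph on V, given by a finite multiset E of unordered pairs of distinct vertices of V. Suppose H is 2km-regular for positive integers k and m, i.e. every vertex of V is an endpoint of exactly 2km edges of E (counted with multiplicity). Then E can be partitioned into m sub-multisets E_1, …, E_m such that for each j, every vertex of V is an endpoint of exactly 2k edges of E_j (counted with multiplicity); in particular, the multigraph (V, E_j) is 2k-regular with maximum degree 2k for every j. -/

import Mathlib

/-!
The argument is Petersen's. All degrees of the multigraph are even, so its edges can be directed so
that in- and out-degrees agree at every vertex (`exists_balanced_orientation`); both are then equal
to `k * m`. Reading an arc `(u, w)` as an edge from a left copy of `u` to a right copy of `w` gives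
a `k * m`-regular bipartite multigraph, from which Hall's theorem removes perfect matchings one at
a time (`BiReg.exists_matching`). The union of `k` of these matchings has in- and out-degree `k`
everywhere, so forgetting directions leaves degree `2 * k`.

A balanced orientation is found by induction on the number of edges: two edges `va`, `vb` at a
vertex `v` are replaced by one edge `ab`, which keeps all degrees even, and in an orientation of
the smaller multigraph the arc on `ab` is rerouted through `v`. Loops may appear during this
process; they are allowed and contribute two to the degree.
-/

/-- The multiset of undirected edges underlying a multiset of arcs. -/
def arcEdges {V : Type} (D : Multiset (V × V)) : Multiset (Sym2 V) :=
  D.map fun p => s(p.1, p.2)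

/-- A multiset of arcs in which every vertex has out-degree `n` and in-degree `n`; the degrees are
recorded as equalities between the multisets of tails or heads and `n` copies of `V`, so that they
can be added and cancelled. -/
def BiReg {V : Type} [Fintype V] (n : ℕ) (D : Multiset (V × V)) : Prop :=
  D.map Prod.fst = n • (Finset.univ : Finset V).val ∧
    D.map Prod.snd = n • (Finset.univ : Finset V).val

/-- A multigraph (loops allowed) with all degrees even can be directed so that in- and out-degrees
agree. The multigraph is presented by an arbitrary orientation `D`, and the degree of `v` is the
multiplicity of `v` among tails and heads together. -/
theorem exists_balanced_orientation {V : Type} [DecidableEq V] (n : ℕ) :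
    ∀ D : Multiset (V × V), D.card = n →
      (∀ v, Even ((D.map Prod.fst + D.map Prod.snd).count v)) →
      ∃ D' : Multiset (V × V), arcEdges D' = arcEdges D ∧ D'.map Prod.fst = D'.map Prod.snd := by
  induction n with
  | zero =>
    intro D hD _
    exact ⟨0, by simp [Multiset.card_eq_zero.mp hD], rfl⟩
  | succ n ih =>
    intro D hD hev
    obtain ⟨⟨v, a⟩, hp⟩ := Multiset.card_pos_iff_exists_mem.mp (by omega : 0 < D.card)
    obtain ⟨D₀, rfl⟩ := Multiset.exists_cons_of_mem hp
    clear hp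
    have hD₀ : D₀.card = n := by simpa using hD
    by_cases hva : v = a
    · subst hva
      obtain ⟨D', h1, h2⟩ := ih D₀ hD₀ (fun w => by
        have := hev w
        simp only [Multiset.map_cons, Multiset.count_add, Multiset.count_cons] at this ⊢
        grind)
      exact ⟨(v, v) ::ₘ D', by simpa [arcEdges] using h1, by simpa using h2⟩
    · -- `v` has odd degree in `D₀`, so a second edge at `v` exists; `b` is its other end.
      have hmem : v ∈ D₀.map Prod.fst + D₀.map Prod.snd := by
        by_contra hcon
        have h0 := Multiset.count_eq_zero_of_notMem hcon
        have := hev v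
        simp only [Multiset.map_cons, Multiset.count_add, Multiset.count_cons] at this h0
        grind
      obtain ⟨b, D₁, hcard, hE, hdeg⟩ : ∃ (b : V) (D₁ : Multiset (V × V)), D₁.card + 1 = n ∧
          arcEdges D₀ = s(v, b) ::ₘ arcEdges D₁ ∧
          D₀.map Prod.fst + D₀.map Prod.snd =
            v ::ₘ b ::ₘ (D₁.map Prod.fst + D₁.map Prod.snd) := by
        rcases Multiset.mem_add.mp hmem with h | h
        · obtain ⟨⟨x, b⟩, hp, rfl⟩ := Multiset.mem_map.mp h
          obtain ⟨D₁, rfl⟩ := Multiset.exists_cons_of_mem hp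
          exact ⟨b, D₁, by simpa using hD₀, by simp [arcEdges], by simp [Multiset.cons_swap]⟩
        · obtain ⟨⟨b, x⟩, hp, rfl⟩ := Multiset.mem_map.mp h
          obtain ⟨D₁, rfl⟩ := Multiset.exists_cons_of_mem hp
          exact ⟨b, D₁, by simpa using hD₀, by simp [arcEdges, Sym2.eq_swap],
            by simp [Multiset.cons_swap]⟩
      obtain ⟨D', h1, h2⟩ := ih ((a, b) ::ₘ D₁) (by simpa using hcard) (fun w => by
        have h := hev w
        have hd := congrArg (Multiset.count w) hdeg
        simp only [Multiset.map_cons, Multiset.count_add, Multiset.count_cons] at h hd ⊢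
        grind)
      have hab : s(a, b) ∈ arcEdges D' := by rw [h1]; simp [arcEdges]
      obtain ⟨⟨x, y⟩, hp, hxy⟩ := Multiset.mem_map.mp hab
      obtain ⟨D'', rfl⟩ := Multiset.exists_cons_of_mem hp
      have hE' : arcEdges D'' = arcEdges D₁ := by
        simp only [arcEdges, Multiset.map_cons] at h1 hxy ⊢
        rw [hxy] at h1
        exact (Multiset.cons_inj_right _).mp h1
      have hgoal : arcEdges ((v, a) ::ₘ D₀) = s(v, a) ::ₘ s(v, b) ::ₘ arcEdges D'' := by
        rw [hE', ← hE]; simp [arcEdges]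
      -- The arc `(x, y)` on the edge `ab` becomes the path `x → v → y`.
      refine ⟨(x, v) ::ₘ (v, y) ::ₘ D'', ?_, ?_⟩
      · rw [hgoal]
        rcases Sym2.eq_iff.mp hxy with ⟨rfl, rfl⟩ | ⟨rfl, rfl⟩
        · simp [arcEdges, Sym2.eq_swap]
        · simp only [arcEdges, Multiset.map_cons]
          rw [Multiset.cons_swap, Sym2.eq_swap (a := x)]
      · simp only [Multiset.map_cons] at h2 ⊢
        rw [Multiset.cons_swap, h2]

/-- Multiplicities over a set `s` of values add up to the number of items whose value is in `s`. -/
theorem card_filter_of_map_eq {V W : Type} [Fintype V] [DecidableEq V] (g : W → V) (n : ℕ)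
    (D : Multiset W) (h : D.map g = n • (Finset.univ : Finset V).val) (s : Finset V) :
    (D.filter fun p => g p ∈ s).card = n * s.card := by
  have h1 : ((D.map g).filter (· ∈ s)).card = (D.filter fun p => g p ∈ s).card := by
    rw [Multiset.filter_map, Multiset.card_map]; rfl
  rw [← h1, h, Multiset.filter_nsmul, Multiset.card_nsmul]
  congr 1
  rw [← Finset.filter_val, Finset.card_val]
  simp

/-- By Hall's theorem a bipartite multigraph of positive degree contains a perfect matching. -/
theorem BiReg.exists_matching {V : Type} [Fintype V] [DecidableEq V] {n : ℕ}
    {D : Multiset (V × V)} (hD : BiReg (n + 1) D) :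
    ∃ M R, D = M + R ∧ BiReg 1 M ∧ BiReg n R := by
  obtain ⟨f, hinj, hf⟩ := (Finset.all_card_le_biUnion_card_iff_exists_injective
    (fun v : V => Finset.univ.filter fun w => (v, w) ∈ D)).mp (fun s => by
      have h1 := card_filter_of_map_eq Prod.fst _ D hD.1 s
      have h2 := card_filter_of_map_eq Prod.snd _ D hD.2
        (s.biUnion fun v : V => Finset.univ.filter fun w => (v, w) ∈ D)
      -- Every arc starting in `s` ends in the neighbourhood of `s`.
      have h3 : (D.filter fun p => p.1 ∈ s) ≤
          D.filter fun p => p.2 ∈ s.biUnion fun v : V =>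
            Finset.univ.filter fun w => (v, w) ∈ D := by
        refine Multiset.le_filter.mpr ⟨Multiset.filter_le _ _, fun p hp => ?_⟩
        have := Multiset.mem_filter.mp hp
        simp only [Finset.mem_biUnion, Finset.mem_filter, Finset.mem_univ, true_and]
        exact ⟨p.1, this.2, this.1⟩
      have h4 := Multiset.card_le_card h3
      rw [h1, h2] at h4
      exact Nat.le_of_mul_le_mul_left h4 n.succ_pos)
  have hbij : Function.Bijective f := Finite.injective_iff_bijective.mp hinj
  have hle : (Finset.univ : Finset V).val.map (fun v => (v, f v)) ≤ D := by
    rw [Multiset.le_iff_subset]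
    · intro p hp
      obtain ⟨v, -, rfl⟩ := Multiset.mem_map.mp hp
      simpa using hf v
    · exact Finset.univ.nodup.map fun v w h => (Prod.ext_iff.mp h).1
  obtain ⟨R, rfl⟩ := Multiset.le_iff_exists_add.mp hle
  have hM : BiReg 1 ((Finset.univ : Finset V).val.map fun v => (v, f v)) := by
    refine ⟨by simp [Multiset.map_map], ?_⟩
    rw [Multiset.map_map, one_smul]
    exact congrArg Finset.val (Finset.map_univ_equiv (Equiv.ofBijective f hbij))
  refine ⟨_, R, rfl, hM, ?_, ?_⟩
  · have h := hD.1
    rw [Multiset.map_add, hM.1, add_comm n 1, add_smul] at h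
    exact add_left_cancel h
  · have h := hD.2
    rw [Multiset.map_add, hM.2, add_comm n 1, add_smul] at h
    exact add_left_cancel h

theorem BiReg.add {V : Type} [Fintype V] {a b : ℕ} {D D' : Multiset (V × V)}
    (h : BiReg a D) (h' : BiReg b D') : BiReg (a + b) (D + D') :=
  ⟨by rw [Multiset.map_add, h.1, h'.1, add_smul], by rw [Multiset.map_add, h.2, h'.2, add_smul]⟩

theorem BiReg.exists_split {V : Type} [Fintype V] [DecidableEq V] (c n : ℕ) :
    ∀ D : Multiset (V × V), BiReg (c + n) D → ∃ M R, D = M + R ∧ BiReg c M ∧ BiReg n R := by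
  induction c with
  | zero => exact fun D hD => ⟨0, D, by simp, by simp [BiReg], by simpa using hD⟩
  | succ c ih =>
    intro D hD
    rw [Nat.add_right_comm] at hD
    obtain ⟨M, R, rfl, hM, hR⟩ := hD.exists_matching
    obtain ⟨M', R', rfl, hM', hR'⟩ := ih R hR
    exact ⟨M' + M, R', by rw [add_comm M' M, add_assoc], hM'.add hM, hR'⟩

theorem BiReg.exists_decomposition {V : Type} [Fintype V] [DecidableEq V] (k m : ℕ) :
    ∀ D : Multiset (V × V), BiReg (k * m) D →
      ∃ f : Fin m → Multiset (V × V), ∑ j, f j = D ∧ ∀ j, BiReg k (f j) := by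
  induction m with
  | zero =>
    intro D hD
    refine ⟨fun _ => 0, ?_, fun j => j.elim0⟩
    have := hD.1
    simp only [mul_zero, zero_smul, Multiset.map_eq_zero] at this
    simp [this]
  | succ m ih =>
    intro D hD
    rw [Nat.mul_succ, add_comm] at hD
    obtain ⟨M, R, rfl, hM, hR⟩ := BiReg.exists_split _ _ D hD
    obtain ⟨f, hf, hfk⟩ := ih R hR
    refine ⟨Fin.cons M f, by simp [Fin.sum_univ_succ, hf], fun j => ?_⟩
    refine Fin.cases ?_ (fun i => ?_) j
    · simpa using hM
    · simpa using hfk i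

/-- In the absence of loops, degree is out-degree plus in-degree. -/
theorem card_filter_arcEdges {V : Type} [DecidableEq V] (v : V) (D : Multiset (V × V))
    (h : ∀ e ∈ arcEdges D, ¬ e.IsDiag) :
    ((arcEdges D).filter fun e => v ∈ e).card =
      (D.map Prod.fst).count v + (D.map Prod.snd).count v := by
  induction D using Multiset.induction_on with
  | empty => simp [arcEdges]
  | cons p D ih =>
    have hp : p.1 ≠ p.2 := by simpa using h s(p.1, p.2) (by simp [arcEdges])
    have ih' := ih fun e he => h e (by
      simp only [arcEdges, Multiset.map_cons, Multiset.mem_cons] at he ⊢; exact Or.inr he)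
    simp only [arcEdges, Multiset.map_cons, Multiset.filter_cons, Multiset.card_add,
      Multiset.count_cons, Sym2.mem_iff] at ih' ⊢
    rw [ih']
    by_cases h1 : v = p.1
    · have h2 : v ≠ p.2 := h1 ▸ hp
      simp only [h1, true_or, if_true, Multiset.card_singleton, if_neg hp]
      omega
    · by_cases h2 : v = p.2
      · simp only [h2, or_true, if_true, Multiset.card_singleton, if_neg hp.symm]
        omega
      · simp [h1, h2]

theorem multigraph_two_factor_decomposition
    (V : Type) [Fintype V] [DecidableEq V]
    (E : Multiset (Sym2 V)) (k m : ℕ) (hk : 0 < k) (hm : 0 < m)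
    (hloopless : ∀ e ∈ E, ¬ e.IsDiag)
    (hreg : ∀ v : V, (E.filter fun e => v ∈ e).card = 2 * k * m) :
    ∃ f : Fin m → Multiset (Sym2 V),
      (∑ j, f j) = E ∧
      ∀ j, ∀ v : V, ((f j).filter fun e => v ∈ e).card = 2 * k := by
  obtain ⟨D, rfl⟩ : ∃ D : Multiset (V × V), arcEdges D = E := by
    refine ⟨E.map Quot.out, ?_⟩
    rw [arcEdges, Multiset.map_map]
    conv_rhs => rw [← Multiset.map_id E]
    exact Multiset.map_congr rfl fun e _ => Quot.out_eq e
  obtain ⟨D', hD', hbal⟩ := exists_balanced_orientation _ D rfl (fun v => by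
    rw [Multiset.count_add, ← card_filter_arcEdges v D hloopless, hreg v, mul_assoc]
    exact even_two_mul _)
  rw [← hD'] at hloopless hreg ⊢
  have hcount : ∀ v, (D'.map Prod.snd).count v = k * m := fun v => by
    have h := card_filter_arcEdges v D' hloopless
    rw [hreg, hbal, mul_assoc] at h
    omega
  have hsnd : D'.map Prod.snd = (k * m) • (Finset.univ : Finset V).val := by
    ext v
    rw [hcount, Multiset.count_nsmul,
      Multiset.count_eq_one_of_mem Finset.univ.nodup (Finset.mem_univ v), mul_one]
  obtain ⟨f, hf, hfk⟩ := BiReg.exists_decomposition k m D' ⟨hbal.trans hsnd, hsnd⟩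
  refine ⟨fun j => arcEdges (f j), ?_, fun j v => ?_⟩
  · rw [← hf]
    exact (map_sum (Multiset.mapAddMonoidHom fun p : V × V => s(p.1, p.2)) f _).symm
  · have hle : f j ≤ D' := hf ▸ Finset.single_le_sum (fun _ _ => Multiset.zero_le _)
      (Finset.mem_univ j)
    rw [card_filter_arcEdges v (f j) fun e he =>
      hloopless e (Multiset.mem_of_le (Multiset.map_le_map hle) he), (hfk j).1, (hfk j).2,
      Multiset.count_nsmul, Multiset.count_eq_one_of_mem Finset.univ.nodup (Finset.mem_univ v)]
    omega
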